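/- arXiv:2407.07068 — 3 statements merged into one kernel-verified Lean document; each statement's English description precedes it below -/
import Mathlib

section
/- Let (Ω, P) be a probability space and X : Ω → ℝ a random variable with X and X² integrable, mean μ = E[X], and standard deviation σ = √(E[(X−μ)²]) with σ > 0. Suppose the distribution of X is symmetric about its mean, i.e., X − μ and μ − X have the same law. Then for every ε ∈ (0, 1/2], P( X ≤ μ + σ·√(1/(2ε)) ) ≥ 1 − ε. (Robust approximation of the (1−ε)-quantile for symmetric distributions, Table I, row S.) -/
/-!
Put `c = σ √(1/(2ε))`. Chebyshev's inequality bounds the two-sided tail `P(|X - μ| ≥ c)` by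
`σ² / c² = 2ε`. By symmetry the disjoint tails `{X - μ > c}` and `{μ - X > c}` have the same
probability, so the upper one has probability at most `ε`; its complement is the event in question.
-/

open MeasureTheory

/-- Table I, row S: for a distribution symmetric about its mean,
`P(X ≤ μ + σ·√(1/(2ε))) ≥ 1 − ε` for every `ε ∈ (0, 1/2]`. -/
theorem robust_quantile_symmetric
    {Ω : Type*} [MeasurableSpace Ω] (P : Measure Ω) [IsProbabilityMeasure P]
    (X : Ω → ℝ) (hX : Integrable X P) (hX2 : Integrable (fun ω => X ω ^ 2) P)
    (μ σ : ℝ) (hμ : μ = ∫ ω, X ω ∂P)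
    (hσ : σ = Real.sqrt (∫ ω, (X ω - μ) ^ 2 ∂P)) (hσpos : 0 < σ)
    (hsymm : Measure.map (fun ω => X ω - μ) P = Measure.map (fun ω => μ - X ω) P)
    (ε : ℝ) (hε : ε ∈ Set.Ioc (0 : ℝ) (1 / 2)) :
    P {ω | X ω ≤ μ + σ * Real.sqrt (1 / (2 * ε))} ≥ ENNReal.ofReal (1 - ε) := by
  obtain ⟨hε0, hε1⟩ := hε
  set c : ℝ := σ * Real.sqrt (1 / (2 * ε)) with hc
  have hcpos : 0 < c := by positivity
  have hL2 : MemLp X 2 P := (memLp_two_iff_integrable_sq hX.1).2 hX2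
  have hXm : AEMeasurable X P := hX.aemeasurable
  have hvar : ProbabilityTheory.variance X P = σ ^ 2 := by
    rw [ProbabilityTheory.variance_eq_integral hXm, ← hμ, hσ, Real.sq_sqrt]
    exact integral_nonneg fun ω => sq_nonneg _
  have hratio : σ ^ 2 / c ^ 2 = 2 * ε := by
    rw [hc, mul_pow, Real.sq_sqrt (by positivity)]
    field_simp
  have hcheb : P {ω | c ≤ |X ω - μ|} ≤ ENNReal.ofReal (2 * ε) := by
    have h := ProbabilityTheory.meas_ge_le_variance_div_sq hL2 hcpos
    rwa [hvar, hratio, ← hμ] at h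
  have hchebR : P.real {ω | c ≤ |X ω - μ|} ≤ 2 * ε :=
    ENNReal.toReal_le_of_le_ofReal (by positivity) hcheb
  have hm1 : AEMeasurable (fun ω => X ω - μ) P := hXm.sub_const μ
  have hm2 : AEMeasurable (fun ω => μ - X ω) P := hXm.const_sub μ
  have hN1 : NullMeasurableSet {ω | c < X ω - μ} P := hm1.nullMeasurable measurableSet_Ioi
  have hN2 : NullMeasurableSet {ω | c < μ - X ω} P := hm2.nullMeasurable measurableSet_Ioi
  have htails : P.real {ω | c < X ω - μ} = P.real {ω | c < μ - X ω} := by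
    have h := congrArg (fun ν : Measure ℝ => ν (Set.Ioi c)) hsymm
    simp only [Measure.map_apply_of_aemeasurable hm1 measurableSet_Ioi,
      Measure.map_apply_of_aemeasurable hm2 measurableSet_Ioi] at h
    exact congrArg ENNReal.toReal h
  have hdisj : Disjoint {ω | c < X ω - μ} {ω | c < μ - X ω} := by
    rw [Set.disjoint_left]
    intro ω h1 h2
    simp only [Set.mem_setOf_eq] at h1 h2
    linarith
  have hsum : P.real {ω | c < X ω - μ} + P.real {ω | c < μ - X ω} ≤ 2 * ε := by
    rw [← measureReal_union₀ hN2 hdisj.aedisjoint]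
    refine (measureReal_mono ?_).trans hchebR
    rintro ω (h | h) <;> simp only [Set.mem_setOf_eq] at h ⊢
    · exact h.le.trans (le_abs_self _)
    · rw [abs_sub_comm]
      exact h.le.trans (le_abs_self _)
  have hcompl : {ω | X ω ≤ μ + c} = {ω | c < X ω - μ}ᶜ := by
    ext ω
    simp only [Set.mem_setOf_eq, Set.mem_compl_iff, not_lt]
    constructor <;> intro h <;> linarith
  rw [ge_iff_le, hcompl, ENNReal.ofReal_le_iff_le_toReal (measure_ne_top _ _)]
  change 1 - ε ≤ P.real {ω | c < X ω - μ}ᶜ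
  rw [probReal_compl_eq_one_sub₀ hN1]
  linarith
end

section
/- Let G(x) = C_0 + C_1 x + C_2 x² + C_3 x³ + C_4 x⁴ be a quartic cost function, with derivative G'(x) = C_1 + 2C_2 x + 3C_3 x² + 4C_4 x³. Let g, φ, μ ∈ ℝ, σ ≥ 0, η > 0, and let d be distributed according to gaussianReal μ (σ²). Then the storage opportunity price θ = (1/η)·E[G'(g + φd)] satisfies θ = (1/η)·( C_1 + 2C_2 g + 2C_2 φμ + 3C_3 g² + 6C_3 g φ μ + 3C_3 φ²(μ² + σ²) + 4C_4 g³ + 12C_4 g² φ μ + 12C_4 g φ²(μ² + σ²) + 4C_4 φ³(μ³ + 3μσ²) ). (Formula (15d).) -/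
/-!
The integrand is a cubic polynomial in `x`, so only the first three raw moments of the Gaussian law
matter. The first two come from its mean and variance. The third, `μ ^ 3 + 3 * μ * v`, follows from
symmetry: the law is invariant under the reflection `x ↦ 2 * μ - x`, and expanding
`E[x ^ 3] = E[(2 * μ - x) ^ 3]` expresses `2 * E[x ^ 3]` through the lower moments.
-/

open MeasureTheory ProbabilityTheory
open scoped NNReal

lemma integrable_pow_gaussianReal (μ : ℝ) (v : ℝ≥0) (n : ℕ) :
    Integrable (fun x : ℝ => x ^ n) (gaussianReal μ v) := by
  have h := (memLp_id_gaussianReal (μ := μ) (v := v) (n : ℝ≥0)).integrable_norm_pow'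
  refine h.mono' (by fun_prop) (Filter.Eventually.of_forall fun x => ?_)
  simp

lemma integral_cubic_gaussianReal (μ : ℝ) (v : ℝ≥0) (a b c e : ℝ) :
    ∫ x, (a + b * x + c * x ^ 2 + e * x ^ 3) ∂(gaussianReal μ v)
      = a + b * μ + c * (∫ x, x ^ 2 ∂(gaussianReal μ v))
        + e * ∫ x, x ^ 3 ∂(gaussianReal μ v) := by
  have h1 : Integrable (fun x : ℝ => x) (gaussianReal μ v) := by
    simpa using integrable_pow_gaussianReal μ v 1
  have h2 := integrable_pow_gaussianReal μ v 2
  have h3 := integrable_pow_gaussianReal μ v 3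
  have i0 : Integrable (fun _ : ℝ => a) (gaussianReal μ v) := integrable_const a
  have i1 : Integrable (fun x : ℝ => a + b * x) (gaussianReal μ v) :=
    i0.add (h1.const_mul b)
  have i2 : Integrable (fun x : ℝ => a + b * x + c * x ^ 2) (gaussianReal μ v) :=
    i1.add (h2.const_mul c)
  rw [integral_add i2 (h3.const_mul e), integral_add i1 (h2.const_mul c),
    integral_add i0 (h1.const_mul b), integral_const_mul, integral_const_mul, integral_const_mul,
    integral_id_gaussianReal]
  simp

lemma integral_sq_gaussianReal (μ : ℝ) (v : ℝ≥0) :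
    ∫ x, x ^ 2 ∂(gaussianReal μ v) = μ ^ 2 + v := by
  have h := variance_eq_sub (memLp_id_gaussianReal (μ := μ) (v := v) 2)
  rw [variance_id_gaussianReal] at h
  simp only [Pi.pow_apply, id_eq, integral_id_gaussianReal] at h
  linarith

/-- The third moment, obtained from the invariance of the law under `x ↦ 2 * μ - x`. -/
lemma integral_cube_gaussianReal (μ : ℝ) (v : ℝ≥0) :
    ∫ x, x ^ 3 ∂(gaussianReal μ v) = μ ^ 3 + 3 * μ * v := by
  have hmap : (gaussianReal μ v).map (fun x => 2 * μ - x) = gaussianReal μ v := by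
    rw [gaussianReal_map_const_sub]
    congr 1
    ring
  have h : ∫ x, x ^ 3 ∂(gaussianReal μ v) = ∫ x, (2 * μ - x) ^ 3 ∂(gaussianReal μ v) := by
    conv_lhs => rw [← hmap]
    rw [integral_map (by fun_prop) (by fun_prop)]
  have hexp : ∀ x : ℝ, (2 * μ - x) ^ 3
      = 8 * μ ^ 3 + (-12 * μ ^ 2) * x + (6 * μ) * x ^ 2 + (-1) * x ^ 3 := fun x => by ring
  simp_rw [hexp] at h
  rw [integral_cubic_gaussianReal, integral_sq_gaussianReal] at h
  linarith

/-- Formula (15d): for quartic cost `G(x) = C₀ + C₁x + C₂x² + C₃x³ + C₄x⁴` with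
`G'(x) = C₁ + 2C₂x + 3C₃x² + 4C₄x³`, the opportunity price
`θ = (1/η)·E[G'(g + φd)]` has the stated closed form. -/
theorem quartic_opportunity_price
    (C₀ C₁ C₂ C₃ C₄ g φ μ σ η : ℝ) (hσ : 0 ≤ σ) (hη : 0 < η)
    (G G' : ℝ → ℝ)
    (hG : ∀ x, G x = C₀ + C₁ * x + C₂ * x ^ 2 + C₃ * x ^ 3 + C₄ * x ^ 4)
    (hG' : ∀ x, G' x = C₁ + 2 * C₂ * x + 3 * C₃ * x ^ 2 + 4 * C₄ * x ^ 3) :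
    (1 / η) * ∫ x, G' (g + φ * x) ∂(gaussianReal μ ⟨σ ^ 2, sq_nonneg σ⟩)
      = (1 / η) * (C₁ + 2 * C₂ * g + 2 * C₂ * φ * μ + 3 * C₃ * g ^ 2
          + 6 * C₃ * g * φ * μ + 3 * C₃ * φ ^ 2 * (μ ^ 2 + σ ^ 2)
          + 4 * C₄ * g ^ 3 + 12 * C₄ * g ^ 2 * φ * μ
          + 12 * C₄ * g * φ ^ 2 * (μ ^ 2 + σ ^ 2)
          + 4 * C₄ * φ ^ 3 * (μ ^ 3 + 3 * μ * σ ^ 2)) := by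
  have hexp : ∀ x : ℝ, G' (g + φ * x)
      = (C₁ + 2 * C₂ * g + 3 * C₃ * g ^ 2 + 4 * C₄ * g ^ 3)
        + (2 * C₂ * φ + 6 * C₃ * g * φ + 12 * C₄ * g ^ 2 * φ) * x
        + (3 * C₃ * φ ^ 2 + 12 * C₄ * g * φ ^ 2) * x ^ 2
        + (4 * C₄ * φ ^ 3) * x ^ 3 := fun x => by rw [hG']; ring
  have key : ∀ v : ℝ≥0, (v : ℝ) = σ ^ 2 →
      ∫ x, G' (g + φ * x) ∂(gaussianReal μ v)
        = C₁ + 2 * C₂ * g + 2 * C₂ * φ * μ + 3 * C₃ * g ^ 2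
          + 6 * C₃ * g * φ * μ + 3 * C₃ * φ ^ 2 * (μ ^ 2 + σ ^ 2)
          + 4 * C₄ * g ^ 3 + 12 * C₄ * g ^ 2 * φ * μ
          + 12 * C₄ * g * φ ^ 2 * (μ ^ 2 + σ ^ 2)
          + 4 * C₄ * φ ^ 3 * (μ ^ 3 + 3 * μ * σ ^ 2) := by
    intro v hv
    simp_rw [hexp]
    rw [integral_cubic_gaussianReal, integral_sq_gaussianReal, integral_cube_gaussianReal, hv]
    ring
  exact congrArg ((1 / η) * ·) (key _ rfl)
end

section
/- Let η, d̂, d̃, θ, θ', λ, π, M, μ, ι̲, ῑ, α̲, β̲ be real numbers with η > 0, d̂ < 0 < d̃, α̲ ≥ 0, β̲ ≥ 0, satisfying the KKT stationarity conditions of the idle case: (i) λ − θ·η − α̲ + ῑ·η = 0, (ii) M + θ/η − λ − β̲ + ι̲/η = 0, (iii) θ' − θ − ι̲ + ῑ = 0, (iv) M·μ − π + ι̲·d̃/η − ῑ·d̂·η = 0. Then the opportunity price at time t−1 is sandwiched between the discharging and charging expressions: (1/(η·d̂))·( θ·d̃/η + λ·(η²·d̂ − d̃) + π + M·(d̃ −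 η²·d̂ − μ) ) ≤ θ' ≤ (η/d̃)·( θ·η·d̂ + λ·(d̃/η² − d̂) + π − M·μ ). (Theorem 1, idle case.) -/
/-!
Solving the stationarity conditions for `αlo`, `βlo`, `θ'` and `π` turns each gap into an
exact product: `θ'` minus the lower expression is `βlo * (η - dtil / (η * dhat))`, and the upper
expression minus `θ'` is `αlo * (1 / η - η * dhat / dtil)`. Both coefficients are positive because
`dhat < 0 < dtil`, so the bounds follow from nonnegativity of the multipliers.
-/

/-- Theorem 1, idle case: under the KKT stationarity conditions of the idle
case, the opportunity price `θ'` is sandwiched between the discharging and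
charging expressions. -/
theorem opportunity_price_coupling_idle
    (η dhat dtil θ θ' lam π M μ ιlo ιhi αlo βlo : ℝ)
    (hη : 0 < η) (hdhat : dhat < 0) (hdtil : 0 < dtil)
    (hα : 0 ≤ αlo) (hβ : 0 ≤ βlo)
    (h1 : lam - θ * η - αlo + ιhi * η = 0)
    (h2 : M + θ / η - lam - βlo + ιlo / η = 0)
    (h3 : θ' - θ - ιlo + ιhi = 0)
    (h4 : M * μ - π + ιlo * dtil / η - ιhi * dhat * η = 0) :
    (1 / (η * dhat)) * (θ * dtil / η + lam * (η ^ 2 * dhat - dtil) + π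
        + M * (dtil - η ^ 2 * dhat - μ)) ≤ θ' ∧
      θ' ≤ (η / dtil) * (θ * η * dhat + lam * (dtil / η ^ 2 - dhat) + π - M * μ) := by
  have hη0 : η ≠ 0 := hη.ne'
  have hd0 : dhat ≠ 0 := hdhat.ne
  have ht0 : dtil ≠ 0 := hdtil.ne'
  have eα : αlo = lam - θ * η + ιhi * η := by linarith
  have eβ : βlo = M + θ / η - lam + ιlo / η := by linarith
  have eθ : θ' = θ + ιlo - ιhi := by linarith
  have eπ : π = M * μ + ιlo * dtil / η - ιhi * dhat * η := by linarith
  constructor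
  · -- The gap is the discharge multiplier times a positive coefficient.
    have key : θ' - (1 / (η * dhat)) * (θ * dtil / η + lam * (η ^ 2 * dhat - dtil) + π
        + M * (dtil - η ^ 2 * dhat - μ)) = βlo * (η + dtil / (η * -dhat)) := by
      rw [eβ, eθ, eπ]
      field_simp
      ring
    have hneg : 0 < -dhat := neg_pos.mpr hdhat
    have : 0 ≤ βlo * (η + dtil / (η * -dhat)) := by positivity
    linarith
  · -- The gap is the charge multiplier times a positive coefficient.
    have key : (η / dtil) * (θ * η * dhat + lam * (dtil / η ^ 2 - dhat) + π - M * μ) - θ'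
        = αlo * (1 / η + η * -dhat / dtil) := by
      rw [eα, eθ, eπ]
      field_simp
      ring
    have hneg : 0 < -dhat := neg_pos.mpr hdhat
    have : 0 ≤ αlo * (1 / η + η * -dhat / dtil) := by positivity
    linarith
end
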